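/- There exist a constant C_0 > 0 and an integer K_0, depending only on p_U, such that under the bin construction with K ≥ K_0, for every k ∈ {1,…,K} one has ∫_X ℓ_k(x)·𝟙(x ∈ Ω_k) dμ(x) ≥ C_0/K. -/

import Mathlib

/-!
Trim a margin `δ = 1 / (4 p_U K)` off each end of the bin. Since the density is at most `p_U`, each
margin has mass at most `1 / (4K)`, so the trimmed bin keeps mass at least `1 / (2K)`
(`measure_Ico_le` gives the mass bound). On the trimmed bin the arguments of the sigmoids are at
distance at least `δ / γ = K² / (4 p_U)` from zero, which is at least `2` once `K ≥ 8 p_U`; there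
`ell` is at least `1/2` (`half_le_ell`). As `ell` is nonnegative on the whole bin (`ell_nonneg`),
the integral is at least `(1/2) · 1 / (2K)`, so `C₀ = 1/4` and `K₀ = ⌈8 p_U⌉` work.
-/

open MeasureTheory

/-- The sigmoid function σ(t) = 1/(1+exp(−t)). -/
noncomputable def sigmoid (t : ℝ) : ℝ := 1 / (1 + Real.exp (-t))

/-- The bin functions ℓ_{k,T}. -/
noncomputable def ell (χ : ℕ → ℝ) (γ : ℝ) (T k : ℕ) (x : ℝ) : ℝ :=
  if k = 1 then 1 - sigmoid ((x - χ 1) / γ)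
  else if k = T then sigmoid ((x - χ (T - 1)) / γ)
  else sigmoid ((x - χ (k - 1)) / γ) - sigmoid ((x - χ k) / γ)


lemma sigmoid_nonneg (t : ℝ) : 0 ≤ sigmoid t := by unfold sigmoid; positivity

lemma sigmoid_le_one (t : ℝ) : sigmoid t ≤ 1 := by
  unfold sigmoid
  rw [div_le_one (by positivity)]
  linarith [Real.exp_pos (-t)]

lemma sigmoid_mono {s t : ℝ} (h : s ≤ t) : sigmoid s ≤ sigmoid t := by
  unfold sigmoid
  gcongr

lemma sigmoid_neg (t : ℝ) : sigmoid (-t) = 1 - sigmoid t := by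
  unfold sigmoid
  rw [neg_neg, Real.exp_neg]
  have := Real.exp_pos t
  field_simp
  ring

lemma sigmoid_le_quarter {t : ℝ} (h : t ≤ -2) : sigmoid t ≤ 1 / 4 := by
  unfold sigmoid
  have := Real.add_one_le_exp (-t)
  gcongr
  linarith

lemma three_quarters_le_sigmoid {t : ℝ} (h : 2 ≤ t) : 3 / 4 ≤ sigmoid t := by
  have := sigmoid_le_quarter (t := -t) (by linarith)
  rw [sigmoid_neg] at this
  linarith

lemma sigmoid_continuous : Continuous sigmoid := by
  unfold sigmoid
  have h (t : ℝ) : 1 + Real.exp (-t) ≠ 0 := by positivity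
  fun_prop (disch := exact h _)

lemma continuous_ell (χ : ℕ → ℝ) (γ : ℝ) (T k : ℕ) : Continuous (ell χ γ T k) := by
  have h (c : ℝ) : Continuous fun x : ℝ => sigmoid ((x - c) / γ) :=
    sigmoid_continuous.comp ((continuous_id.sub continuous_const).div_const _)
  unfold ell
  split_ifs
  · exact continuous_const.sub (h _)
  · exact h _
  · exact (h _).sub (h _)

lemma ell_nonneg {χ : ℕ → ℝ} {γ : ℝ} (hγ : 0 < γ) {T k : ℕ} (hχ : χ (k - 1) ≤ χ k) (x : ℝ) :
    0 ≤ ell χ γ T k x := by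
  unfold ell
  split_ifs
  · linarith [sigmoid_le_one ((x - χ 1) / γ)]
  · exact sigmoid_nonneg _
  · refine sub_nonneg.2 (sigmoid_mono ?_)
    gcongr

lemma half_le_ell {χ : ℕ → ℝ} {γ δ : ℝ} (hγ : 0 < γ) (hδ : 2 * γ ≤ δ) {T k : ℕ} {x : ℝ}
    (hx : x ∈ Set.Ico (χ (k - 1) + δ) (χ k - δ)) : 1 / 2 ≤ ell χ γ T k x := by
  have hl : 3 / 4 ≤ sigmoid ((x - χ (k - 1)) / γ) :=
    three_quarters_le_sigmoid ((le_div_iff₀ hγ).2 (by linarith [hx.1]))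
  have hr : sigmoid ((x - χ k) / γ) ≤ 1 / 4 :=
    sigmoid_le_quarter ((div_le_iff₀ hγ).2 (by linarith [hx.2]))
  unfold ell
  split_ifs with h1 h2
  · subst h1; linarith
  · subst h2; linarith
  · linarith

lemma measure_Ico_le {a b pU : ℝ} (hpU : 0 ≤ pU) {dens : ℝ → ℝ}
    (hd : ∀ x ∈ Set.Icc a b, dens x ≤ pU) {p q : ℝ} :
    ((volume.restrict (Set.Icc a b)).withDensity fun x => ENNReal.ofReal (dens x)) (Set.Ico p q)
      ≤ ENNReal.ofReal (pU * (q - p)) := by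
  rw [withDensity_apply _ measurableSet_Ico]
  calc ∫⁻ x in Set.Ico p q, ENNReal.ofReal (dens x) ∂(volume.restrict (Set.Icc a b))
      ≤ ∫⁻ _ in Set.Ico p q, ENNReal.ofReal pU ∂(volume.restrict (Set.Icc a b)) := by
        refine lintegral_mono_ae (ae_restrict_of_ae ?_)
        filter_upwards [ae_restrict_mem measurableSet_Icc] with x hx
        exact ENNReal.ofReal_le_ofReal (hd x hx)
    _ ≤ ENNReal.ofReal (pU * (q - p)) := by
        rw [setLIntegral_const, ENNReal.ofReal_mul hpU, ← Real.volume_Ico]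
        gcongr
        exact Measure.restrict_le_self

/-- **Lemma A.1, second part.** There are C₀ > 0 and K₀ depending only on p_U such that
under the bin construction with K ≥ K₀, ∫ ℓ_k(x)·𝟙(x ∈ Ω_k) dμ(x) ≥ C₀/K for all k. -/
theorem ell_integral_inside_bin_ge
    (pU : ℝ) (hpU : 0 < pU) :
    ∃ C₀ : ℝ, 0 < C₀ ∧ ∃ K₀ : ℕ,
      ∀ (a b : ℝ), a < b →
      ∀ (pL : ℝ), 0 < pL → pL ≤ pU →
      ∀ (dens : ℝ → ℝ), Measurable dens →
      (∀ x ∈ Set.Icc a b, pL ≤ dens x ∧ dens x ≤ pU) →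
      ∀ (μ : Measure ℝ),
        μ = (volume.restrict (Set.Icc a b)).withDensity
          (fun x => ENNReal.ofReal (dens x)) →
        IsProbabilityMeasure μ →
      ∀ (K : ℕ), 2 ≤ K → K₀ ≤ K →
      ∀ (χ : ℕ → ℝ), (∀ k < K, χ k < χ (k + 1)) →
        Set.Icc a b ⊆ Set.Icc (χ 0) (χ K) →
        (∀ k, 1 ≤ k → k ≤ K →
          μ (Set.Ico (χ (k - 1)) (χ k)) = (K : ENNReal)⁻¹) →
      ∀ (γ : ℝ), γ = 1 / (K : ℝ) ^ 3 →
      ∀ k, 1 ≤ k → k ≤ K →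
        C₀ / (K : ℝ) ≤ ∫ x in Set.Ico (χ (k - 1)) (χ k), ell χ γ K k x ∂μ := by
  refine ⟨1 / 4, by norm_num, ⌈8 * pU⌉₊, ?_⟩
  intro a b _ pL _ _ dens _ hdens μ hμ hprob K hK2 hK χ hχ _ hbin γ hγ k hk1 hkK
  have hK0 : (2 : ℝ) ≤ K := by exact_mod_cast hK2
  have hKp : (0 : ℝ) < K := by linarith
  have hK8 : 8 * pU ≤ K := (Nat.le_ceil _).trans (by exact_mod_cast hK)
  have hγ0 : 0 < γ := by rw [hγ]; positivity
  have hχk : χ (k - 1) ≤ χ k := by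
    have := hχ (k - 1) (by omega)
    rw [Nat.sub_add_cancel hk1] at this
    exact this.le
  obtain ⟨δ, hδ⟩ : ∃ δ : ℝ, δ = 1 / (4 * pU * K) := ⟨_, rfl⟩
  have hδγ : 2 * γ ≤ δ := by
    rw [hδ, hγ, ← mul_div_assoc, mul_one, div_le_div_iff₀ (by positivity) (by positivity)]
    have : 8 * pU ≤ (K : ℝ) ^ 2 := by nlinarith
    nlinarith
  have hmargin : pU * δ = 1 / (4 * K) := by rw [hδ]; field_simp
  have hIco (p : ℝ) : μ.real (Set.Ico p (p + δ)) ≤ 1 / (4 * K) := by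
    refine ENNReal.toReal_le_of_le_ofReal (by positivity) ?_
    rw [hμ, ← hmargin]
    simpa using measure_Ico_le hpU.le (fun x hx => (hdens x hx).2) (p := p) (q := p + δ)
  have hmass : μ.real (Set.Ico (χ (k - 1)) (χ k)) = 1 / K := by
    simp [measureReal_def, hbin k hk1 hkK]
  have hmid : 1 / (2 * (K : ℝ)) ≤ μ.real (Set.Ico (χ (k - 1) + δ) (χ k - δ)) := by
    -- The cover holds even when the trimmed bin is empty and the two margins overlap.
    have hcover : Set.Ico (χ (k - 1)) (χ k) ⊆
        Set.Ico (χ (k - 1)) (χ (k - 1) + δ) ∪ Set.Ico (χ k - δ) (χ k - δ + δ) ∪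
          Set.Ico (χ (k - 1) + δ) (χ k - δ) := by
      rintro x ⟨h1, h2⟩
      simp only [Set.mem_union, Set.mem_Ico, sub_add_cancel]
      grind
    have h := (measureReal_mono (μ := μ) hcover).trans (measureReal_union_le _ _)
    have h' := measureReal_union_le (μ := μ) (Set.Ico (χ (k - 1)) (χ (k - 1) + δ))
      (Set.Ico (χ k - δ) (χ k - δ + δ))
    have e : 1 / (2 * (K : ℝ)) = 1 / K - 1 / (4 * K) - 1 / (4 * K) := by field_simp; norm_num
    linarith [hIco (χ (k - 1)), hIco (χ k - δ)]
  have hint : IntegrableOn (ell χ γ K k) (Set.Ico (χ (k - 1)) (χ k)) μ :=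
    ((continuous_ell χ γ K k).continuousOn.integrableOn_Icc).mono_set Set.Ico_subset_Icc_self
  have hδ0 : 0 ≤ δ := by linarith
  have hsub : Set.Ico (χ (k - 1) + δ) (χ k - δ) ⊆ Set.Ico (χ (k - 1)) (χ k) :=
    Set.Ico_subset_Ico (by linarith) (by linarith)
  calc 1 / 4 / (K : ℝ) = 1 / 2 * (1 / (2 * K)) := by field_simp; norm_num
    _ ≤ 1 / 2 * μ.real (Set.Ico (χ (k - 1) + δ) (χ k - δ)) := by gcongr
    _ ≤ ∫ x in Set.Ico (χ (k - 1) + δ) (χ k - δ), ell χ γ K k x ∂μ :=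
        setIntegral_ge_of_const_le_real measurableSet_Ico (measure_ne_top _ _)
          (fun x hx => half_le_ell hγ0 hδγ hx) (hint.mono_set hsub)
    _ ≤ ∫ x in Set.Ico (χ (k - 1)) (χ k), ell χ γ K k x ∂μ :=
        setIntegral_mono_set hint (ae_of_all _ (ell_nonneg hγ0 hχk))
          hsub.eventuallyLE
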